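/- arXiv:1507.08237 — 2 statements merged into one kernel-verified Lean document; each statement's English description precedes it below -/
import Mathlib

section
/- (Theorem 6.1.) Let $\kappa_1>1$ and $0<\kappa_2<1$ with $\kappa_1\kappa_2<1$, let $C<0$ be a constant, let $\Omega\subseteq\mathbb{R}^2$ be open and simply connected with $x_0\in\Omega$, and let $S:\Omega\to\mathbb{R}^2$ be $C^1$. Assume $|Sx_0| < \dfrac{-C\sqrt{\kappa_1^2-1}}{\kappa_1(\kappa_1-\kappa_2)}$, and that $\mathrm{curl}\,S = 0$ and $S\times \nabla(|S|^2) = 0$ on a neighborhood of $x_0$. Then for every $\delta_0$ with $0<\delta_0<\dfrac{1}{1-\kappa_1\kappa_2}\left(-C - \dfrac{\kappa_1(\kappa_1-\kappa_2)}{\sqrt{\kappa_1^2-1}}|Sx_0|\right)$, there exist an open neighborhood $U\subseteq\Omega$ of $x_0$ and a unique $C^2$ function $u:U\to\mathbb{R}$ satisfying on $U$ the system $\dfrac{(1-\kappa_1\kappa_2)u(x)+C}{(\kappa_1^2-\kappa_1\kappa_2)\sqrt{\kappa_1^2+(\kappa_1^2-1)|\nabla u(x)|^2}+\kappa_1^2(1-\kappa_1\kappa_2)}\,\nabla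 u(x) = \dfrac{Sx}{\kappa_1^2-1}$, together with $u(x_0)=\delta_0$ and $0<u(x)<\dfrac{-C}{1-\kappa_1\kappa_2}$ for all $x\in U$. -/
noncomputable section

/-- Euclidean inner product in `ℝ³`. -/
def dot3 (x y : Fin 3 → ℝ) : ℝ := x 0 * y 0 + x 1 * y 1 + x 2 * y 2

/-- Euclidean norm in `ℝ³`. -/
def norm3 (x : Fin 3 → ℝ) : ℝ := Real.sqrt (dot3 x x)

/-- Euclidean inner product in `ℝ²`. -/
def dot2 (x y : Fin 2 → ℝ) : ℝ := x 0 * y 0 + x 1 * y 1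

/-- Euclidean norm in `ℝ²`. -/
def norm2 (x : Fin 2 → ℝ) : ℝ := Real.sqrt (dot2 x x)

/-- The embedding `x = (x₁,x₂) ↦ (x₁,x₂,0)` of the source plane into `ℝ³`. -/
def lift2 (x : Fin 2 → ℝ) : Fin 3 → ℝ := ![x 0, x 1, 0]

/-- Cross product in `ℝ³`. -/
def cross3 (x y : Fin 3 → ℝ) : Fin 3 → ℝ :=
  ![x 1 * y 2 - x 2 * y 1, x 2 * y 0 - x 0 * y 2, x 0 * y 1 - x 1 * y 0]

/-- Partial derivative `∂f/∂xᵢ` of a scalar function on `ℝ²`. -/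
def pd (i : Fin 2) (f : (Fin 2 → ℝ) → ℝ) (x : Fin 2 → ℝ) : ℝ :=
  fderiv ℝ f x (Pi.single i 1)

/-- Gradient of a scalar function on `ℝ²`. -/
def grad2 (f : (Fin 2 → ℝ) → ℝ) (x : Fin 2 → ℝ) : Fin 2 → ℝ :=
  ![pd 0 f x, pd 1 f x]

/-- Two-dimensional curl of a plane field: `curl V = ∂V₂/∂x₁ - ∂V₁/∂x₂`. -/
def curl2 (V : (Fin 2 → ℝ) → (Fin 2 → ℝ)) (x : Fin 2 → ℝ) : ℝ :=
  pd 0 (fun y => V y 1) x - pd 1 (fun y => V y 0) x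

/-- Two-dimensional cross product `a × b = a₁b₂ - a₂b₁`. -/
def cross2v (a b : Fin 2 → ℝ) : ℝ := a 0 * b 1 - a 1 * b 0

end

/-- A function `u` solves the imaging system (6.1) on `U` with value `δ0` at `x0` and the
natural bounds `0 < u < -C/(1-κ₁κ₂)`. -/
def IsLensSolution (κ1 κ2 C : ℝ) (S : (Fin 2 → ℝ) → (Fin 2 → ℝ))
    (U : Set (Fin 2 → ℝ)) (x0 : Fin 2 → ℝ) (δ0 : ℝ) (u : (Fin 2 → ℝ) → ℝ) : Prop :=
  ContDiffOn ℝ 2 u U ∧ u x0 = δ0 ∧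
    (∀ x ∈ U,
      (((1 - κ1 * κ2) * u x + C) /
          ((κ1 ^ 2 - κ1 * κ2) * Real.sqrt (κ1 ^ 2 + (κ1 ^ 2 - 1) * norm2 (grad2 u x) ^ 2)
            + κ1 ^ 2 * (1 - κ1 * κ2))) • grad2 u x = (κ1 ^ 2 - 1)⁻¹ • S x) ∧
    ∀ x ∈ U, 0 < u x ∧ u x < -C / (1 - κ1 * κ2)

open Filter Topology Set in
theorem lens_exist {E : Type*} [NormedAddCommGroup E] [NormedSpace ℝ E]
    (G : E → ℝ → E →L[ℝ] ℝ) (x0 : E) (δ r ε M L : ℝ) (hr : 0 < r) (hε : 0 < ε)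
    (hM0 : 0 ≤ M) (hL0 : 0 ≤ L)
    (P : (E → ℝ) → Prop) (hP0 : P (fun _ => δ))
    (hstep : ∀ v, P v → (∀ x ∈ Metric.ball x0 r, |v x - δ| ≤ ε) →
      ∃ f, P f ∧ f x0 = δ ∧ ∀ x ∈ Metric.ball x0 r, HasFDerivAt f (G x (v x)) x)
    (hM : ∀ x ∈ Metric.ball x0 r, ∀ y, |y - δ| ≤ ε → ‖G x y‖ ≤ M)
    (hMr : M * r ≤ ε)
    (hL : ∀ x ∈ Metric.ball x0 r, ∀ y y', |y - δ| ≤ ε → |y' - δ| ≤ ε →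
      ‖G x y - G x y'‖ ≤ L * |y - y'|)
    (hLr : L * r ≤ 1 / 2) :
    ∃ u : E → ℝ, u x0 = δ ∧ ∀ x ∈ Metric.ball x0 r, |u x - δ| ≤ ε ∧
      HasFDerivAt u (G x (u x)) x := by
  have hx0 : x0 ∈ Metric.ball x0 r := Metric.mem_ball_self hr
  have hconv : Convex ℝ (Metric.ball x0 r) := convex_ball x0 r
  have hnorm : ∀ x ∈ Metric.ball x0 r, ‖x - x0‖ ≤ r := fun x hx => by
    rw [← dist_eq_norm]; exact (Metric.mem_ball.1 hx).le
  let T := {v : E → ℝ // P v ∧ v x0 = δ ∧ ∀ x ∈ Metric.ball x0 r, |v x - δ| ≤ ε}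
  have hΦ : ∀ v : T, ∃ f : T, ∀ x ∈ Metric.ball x0 r, HasFDerivAt f.1 (G x (v.1 x)) x := by
    rintro ⟨v, hPv, hv0, hv⟩
    obtain ⟨f, hPf, hf0, hf⟩ := hstep v hPv hv
    refine ⟨⟨f, hPf, hf0, fun x hx => ?_⟩, hf⟩
    have h := hconv.norm_image_sub_le_of_norm_hasFDerivWithin_le (𝕜 := ℝ) (C := M)
      (fun x hx => (hf x hx).hasFDerivWithinAt) (fun x hx => hM x hx _ (hv x hx)) hx0 hx
    rw [hf0, Real.norm_eq_abs] at h
    exact h.trans ((mul_le_mul_of_nonneg_left (hnorm x hx) hM0).trans hMr)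
  choose Φ hΦ using hΦ
  let v0 : T := ⟨fun _ => δ, hP0, rfl, fun x _ => by simpa using hε.le⟩
  let v : ℕ → T := fun n => Φ^[n] v0
  have hv : ∀ n, ∀ x ∈ Metric.ball x0 r, HasFDerivAt (v (n+1)).1 (G x ((v n).1 x)) x := by
    intro n
    have : v (n+1) = Φ (v n) := Function.iterate_succ_apply' _ _ _
    rw [this]
    exact hΦ (v n)
  have hd : ∀ n, ∀ x ∈ Metric.ball x0 r,
      |(v (n+1)).1 x - (v n).1 x| ≤ (4*ε) / 2 / 2 ^ n := by
    intro n
    induction n with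
    | zero =>
      intro x hx
      have h1 := (v 1).2.2.2 x hx
      have h2 := (v 0).2.2.2 x hx
      rw [abs_le] at *
      simp only [zero_add, pow_zero, div_one]
      constructor <;> linarith
    | succ n ih =>
      intro x hx
      have h := hconv.norm_image_sub_le_of_norm_hasFDerivWithin_le (𝕜 := ℝ)
        (C := L * ((4*ε) / 2 / 2 ^ n))
        (fun x hx => ((hv (n+1) x hx).sub (hv n x hx)).hasFDerivWithinAt)
        (fun x hx => (hL x hx _ _ ((v (n+1)).2.2.2 x hx) ((v n).2.2.2 x hx)).trans
          (mul_le_mul_of_nonneg_left (ih x hx) hL0)) hx0 hx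
      simp only [Pi.sub_apply, (v (n+1+1)).2.2.1, (v (n+1)).2.2.1, sub_self, sub_zero,
        Real.norm_eq_abs] at h
      refine h.trans ?_
      have hp : 0 ≤ (4*ε) / 2 / 2 ^ n := by positivity
      calc L * ((4*ε) / 2 / 2 ^ n) * ‖x - x0‖ ≤ L * ((4*ε) / 2 / 2 ^ n) * r :=
            mul_le_mul_of_nonneg_left (hnorm x hx) (mul_nonneg hL0 hp)
        _ = (L * r) * ((4*ε) / 2 / 2 ^ n) := by ring
        _ ≤ 1/2 * ((4*ε) / 2 / 2 ^ n) := mul_le_mul_of_nonneg_right hLr hp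
        _ = (4*ε) / 2 / 2 ^ (n+1) := by rw [pow_succ]; field_simp
  have hd' : ∀ x ∈ Metric.ball x0 r, ∀ n,
      dist ((v n).1 x) ((v (n+1)).1 x) ≤ (4*ε) / 2 / 2 ^ n := fun x hx n => by
    rw [dist_comm, Real.dist_eq]; exact hd n x hx
  have hlim : ∀ x, ∃ a, x ∈ Metric.ball x0 r → Tendsto (fun n => (v n).1 x) atTop (𝓝 a) := by
    intro x
    by_cases hx : x ∈ Metric.ball x0 r
    · obtain ⟨a, ha⟩ := cauchySeq_tendsto_of_complete (cauchySeq_of_le_geometric_two (hd' x hx))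
      exact ⟨a, fun _ => ha⟩
    · exact ⟨0, fun h => absurd h hx⟩
  choose u hu using hlim
  have hrate : ∀ x ∈ Metric.ball x0 r, ∀ n, dist ((v n).1 x) (u x) ≤ (4*ε) / 2 ^ n :=
    fun x hx n => dist_le_of_le_geometric_two_of_tendsto (hd' x hx) (hu x hx) n
  have huε : ∀ x ∈ Metric.ball x0 r, |u x - δ| ≤ ε := fun x hx =>
    le_of_tendsto ((hu x hx).sub_const δ).abs (Eventually.of_forall fun n => (v n).2.2.2 x hx)
  refine ⟨u, tendsto_nhds_unique (hu x0 hx0) ?_, fun x hx => ⟨huε x hx, ?_⟩⟩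
  · simp only [fun n => (v n).2.2.1]; exact tendsto_const_nhds
  · refine hasFDerivAt_of_tendstoUniformlyOn (l := atTop) (f := fun n => (v (n+1)).1)
      (f' := fun n x => G x ((v n).1 x)) (g' := fun x => G x (u x)) Metric.isOpen_ball ?_
      hv (fun x hx => (tendsto_add_atTop_iff_nat 1).2 (hu x hx)) hx
    rw [Metric.tendstoUniformlyOn_iff]
    intro η hη
    have ht : Tendsto (fun n : ℕ => L * ((4*ε) * (1/2:ℝ)^n)) atTop (𝓝 (L * ((4*ε) * 0))) :=
      ((tendsto_pow_atTop_nhds_zero_of_lt_one (by norm_num) (by norm_num)).const_mul _).const_mul _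
    rw [mul_zero, mul_zero] at ht
    filter_upwards [ht.eventually (gt_mem_nhds hη)] with n hn x hx
    rw [dist_comm, dist_eq_norm]
    refine lt_of_le_of_lt (hL x hx _ _ ((v n).2.2.2 x hx) (huε x hx)) (lt_of_le_of_lt ?_ hn)
    refine mul_le_mul_of_nonneg_left ?_ hL0
    have := hrate x hx n
    rw [Real.dist_eq] at this
    refine this.trans (le_of_eq ?_)
    rw [one_div, inv_pow]; rfl

open Filter Topology Set in
theorem lens_local_unique {E : Type*} [NormedAddCommGroup E] [NormedSpace ℝ E]
    (G : E × ℝ → E →L[ℝ] ℝ) (x1 : E) (u v : E → ℝ) (huv : u x1 = v x1)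
    (hG : ContDiffAt ℝ 1 G (x1, u x1))
    (hu : ∀ᶠ x in 𝓝 x1, HasFDerivAt u (G (x, u x)) x)
    (hv : ∀ᶠ x in 𝓝 x1, HasFDerivAt v (G (x, v x)) x) :
    ∀ᶠ x in 𝓝 x1, u x = v x := by
  obtain ⟨K, t, ht, hK⟩ := hG.exists_lipschitzOnWith
  have hcu : ContinuousAt u x1 := hu.self_of_nhds.continuousAt
  have hcv : ContinuousAt v x1 := hv.self_of_nhds.continuousAt
  have h1 : ∀ᶠ x in 𝓝 x1, (x, u x) ∈ t := (continuousAt_id.prodMk hcu).eventually ht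
  have h2 : ∀ᶠ x in 𝓝 x1, (x, v x) ∈ t := by
    rw [huv] at ht
    exact (continuousAt_id.prodMk hcv).eventually ht
  have h3 : ∀ᶠ x in 𝓝 x1, |u x - v x| < 1 := by
    have : Tendsto (fun x => |u x - v x|) (𝓝 x1) (𝓝 |u x1 - v x1|) := (hcu.sub hcv).abs
    rw [huv, sub_self, abs_zero] at this
    exact this.eventually (gt_mem_nhds one_pos)
  obtain ⟨ρ, hρ, hball⟩ := Metric.eventually_nhds_iff_ball.1 (hu.and (hv.and (h1.and (h2.and h3))))
  set r := min ρ (1 / (2 * (K + 1))) with hr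
  have hK0 : (0:ℝ) ≤ K := K.2
  have hrpos : 0 < r := lt_min hρ (by positivity)
  have hsub : Metric.ball x1 r ⊆ Metric.ball x1 ρ := Metric.ball_subset_ball (min_le_left _ _)
  have hKr : K * r ≤ 1 / 2 := by
    have : r ≤ 1 / (2 * (K + 1)) := min_le_right _ _
    calc K * r ≤ K * (1 / (2 * (K + 1))) := mul_le_mul_of_nonneg_left this hK0
      _ ≤ 1 / 2 := by
        rw [mul_one_div, div_le_div_iff₀ (by positivity) (by positivity)]; linarith
  have key : ∀ n : ℕ, ∀ x ∈ Metric.ball x1 r, |u x - v x| ≤ (1/2)^n := by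
    intro n
    induction n with
    | zero => intro x hx; simpa using (hball x (hsub hx)).2.2.2.2.le
    | succ n ih =>
      intro x hx
      have h := (convex_ball x1 r).norm_image_sub_le_of_norm_hasFDerivWithin_le (𝕜 := ℝ)
        (C := K * (1/2)^n) (f := u - v) (f' := fun x => G (x, u x) - G (x, v x))
        (fun x hx => ((hball x (hsub hx)).1.sub (hball x (hsub hx)).2.1).hasFDerivWithinAt)
        (fun x hx => by
          have := hK.norm_sub_le (hball x (hsub hx)).2.2.1 (hball x (hsub hx)).2.2.2.1
          refine this.trans (mul_le_mul_of_nonneg_left ?_ hK0)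
          have : ‖(x, u x) - (x, v x)‖ = |u x - v x| := by
            simp [Prod.norm_def]
          rw [this]; exact ih x hx) (Metric.mem_ball_self hrpos) hx
      simp only [Pi.sub_apply, huv, sub_self, sub_zero, Real.norm_eq_abs] at h
      have hn : ‖x - x1‖ ≤ r := by rw [← dist_eq_norm]; exact (Metric.mem_ball.1 hx).le
      have hp : (0:ℝ) ≤ (1/2)^n := by positivity
      calc |u x - v x| ≤ K * (1/2)^n * ‖x - x1‖ := h
        _ ≤ K * (1/2)^n * r := mul_le_mul_of_nonneg_left hn (mul_nonneg hK0 hp)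
        _ = (K * r) * (1/2)^n := by ring
        _ ≤ 1/2 * (1/2)^n := mul_le_mul_of_nonneg_right hKr hp
        _ = (1/2)^(n+1) := by ring
  filter_upwards [Metric.ball_mem_nhds x1 hrpos] with x hx
  have ht := tendsto_pow_atTop_nhds_zero_of_lt_one (r := (1/2:ℝ)) (by norm_num) (by norm_num)
  have : |u x - v x| ≤ 0 := ge_of_tendsto ht (Eventually.of_forall fun n => key n x hx)
  exact sub_eq_zero.1 (abs_nonpos_iff.1 this)

open Filter Topology Set in
theorem lens_unique {E : Type*} [NormedAddCommGroup E] [NormedSpace ℝ E]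
    (G : E × ℝ → E →L[ℝ] ℝ) (U : Set E) (hU : IsOpen U) (hc : IsPreconnected U)
    (x0 : E) (hx0 : x0 ∈ U) (u v : E → ℝ) (huv : u x0 = v x0)
    (hG : ∀ x ∈ U, ContDiffAt ℝ 1 G (x, u x))
    (hu : ∀ x ∈ U, HasFDerivAt u (G (x, u x)) x)
    (hv : ∀ x ∈ U, HasFDerivAt v (G (x, v x)) x) : EqOn u v U := by
  have hopen : ∀ x ∈ U, u x = v x → ∀ᶠ y in 𝓝 x, u y = v y := fun x hx h =>
    lens_local_unique G x u v h (hG x hx)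
      (by filter_upwards [hU.mem_nhds hx] with y hy using hu y hy)
      (by filter_upwards [hU.mem_nhds hx] with y hy using hv y hy)
  let A : Set E := {x | ∀ᶠ y in 𝓝 x, u y = v y}
  let B : Set E := {x | ∀ᶠ y in 𝓝 x, u y ≠ v y}
  have hA : IsOpen A := isOpen_setOfPred_eventually_nhds
  have hB : IsOpen B := isOpen_setOfPred_eventually_nhds
  have hcov : U ⊆ A ∪ B := by
    intro x hx
    by_cases h : u x = v x
    · exact Or.inl (hopen x hx h)
    · exact Or.inr (((hu x hx).continuousAt.ne_iff_eventually_ne (hv x hx).continuousAt).1 h)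
  intro x hx
  by_contra hne
  have hxB : x ∈ B := (hcov hx).resolve_left fun h => hne h.self_of_nhds
  obtain ⟨z, -, hzA, hzB⟩ := hc A B hA hB hcov ⟨x0, hx0, hopen x0 hx0 huv⟩ ⟨x, hx, hxB⟩
  exact hzB.self_of_nhds hzA.self_of_nhds

/-- the discriminant-like coefficient -/
noncomputable def lensA (m b : ℝ) (p : ℝ × ℝ) : ℝ := m ^ 2 * p.1 ^ 2 - b ^ 2 * m * p.2

/-- the positive root -/
noncomputable def lensQ (m k a b : ℝ) (p : ℝ × ℝ) : ℝ :=
  (m * p.1 * k * a + Real.sqrt ((m * p.1 * k * a) ^ 2 + lensA m b p * (k * b ^ 2 - k ^ 2 * a ^ 2)))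
    / lensA m b p

theorem lensQ_contDiffAt (m k a b : ℝ) (hK : 0 < k * b ^ 2 - k ^ 2 * a ^ 2)
    (p : ℝ × ℝ) (hA : 0 < lensA m b p) : ContDiffAt ℝ 1 (lensQ m k a b) p := by
  have hAc : ContDiffAt ℝ 1 (lensA m b) p := by
    unfold lensA; fun_prop
  have hpos : 0 < lensA m b p * (k * b ^ 2 - k ^ 2 * a ^ 2) := mul_pos hA hK
  unfold lensQ
  refine ContDiffAt.div ?_ hAc hA.ne'
  refine ContDiffAt.add (by fun_prop) (ContDiffAt.sqrt ?_ (by positivity))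
  exact ContDiffAt.add (by fun_prop) (hAc.mul contDiffAt_const)

theorem lensQ_spec (m k a b w σ : ℝ) (hm : 0 < m) (hk : 0 < k) (ha : 0 < a) (hb : 0 < b)
    (hK : 0 < k * b ^ 2 - k ^ 2 * a ^ 2) (hw : 0 < w) (hσ : 0 ≤ σ) (hA : 0 < lensA m b (w, σ)) :
    0 < lensQ m k a b (w, σ) ∧
    m * w * lensQ m k a b (w, σ) =
      b * Real.sqrt (k + m * (lensQ m k a b (w, σ) ^ 2 * σ)) + k * a := by
  have hle : lensA m b (w, σ) ≤ m ^ 2 * w ^ 2 := by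
    unfold lensA; simp only; nlinarith [mul_nonneg (mul_pos (pow_pos hb 2) hm).le hσ]
  have hAdef : lensA m b (w, σ) = m ^ 2 * w ^ 2 - b ^ 2 * m * σ := rfl
  set A := lensA m b (w, σ) with hAe
  set q := lensQ m k a b (w, σ) with hq
  have hqe : q = (m * w * k * a + Real.sqrt ((m * w * k * a) ^ 2 + A * (k * b ^ 2 - k ^ 2 * a ^ 2)))
    / A := rfl
  have hAK := mul_pos hA hK
  set R := Real.sqrt ((m * w * k * a) ^ 2 + A * (k * b ^ 2 - k ^ 2 * a ^ 2)) with hR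
  have hR2 : R ^ 2 = (m * w * k * a) ^ 2 + A * (k * b ^ 2 - k ^ 2 * a ^ 2) :=
    Real.sq_sqrt (by positivity)
  have hc : 0 < m * w * k * a := by positivity
  have hR1 : 0 ≤ R := Real.sqrt_nonneg _
  have hAq : A * q = m * w * k * a + R := by rw [hqe]; field_simp
  have hqpos : 0 < q := by rw [hqe]; positivity
  have hquad : A * q ^ 2 - 2 * (m * w * k * a) * q - (k * b ^ 2 - k ^ 2 * a ^ 2) = 0 := by
    have : A * (A * q ^ 2 - 2 * (m * w * k * a) * q - (k * b ^ 2 - k ^ 2 * a ^ 2)) = 0 := by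
      have : A * (A * q ^ 2 - 2 * (m * w * k * a) * q - (k * b ^ 2 - k ^ 2 * a ^ 2))
        = (A * q) ^ 2 - 2 * (m * w * k * a) * (A * q) - A * (k * b ^ 2 - k ^ 2 * a ^ 2) := by ring
      rw [this, hAq]; linear_combination hR2
    exact (mul_eq_zero.1 this).resolve_left hA.ne'
  refine ⟨hqpos, ?_⟩
  have hge : k * a ≤ m * w * q := by
    have h1 : m * w * (k * a) ≤ m * w * (m * w * q) := by
      have : A * q ≤ m ^ 2 * w ^ 2 * q := mul_le_mul_of_nonneg_right hle hqpos.le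
      nlinarith
    exact le_of_mul_le_mul_left h1 (by positivity)
  have hs : b * Real.sqrt (k + m * (q ^ 2 * σ)) = m * w * q - k * a := by
    have : b * Real.sqrt (k + m * (q ^ 2 * σ)) = Real.sqrt (b ^ 2 * (k + m * (q ^ 2 * σ))) := by
      rw [Real.sqrt_mul (by positivity), Real.sqrt_sq hb.le]
    rw [this, Real.sqrt_eq_iff_mul_self_eq (by positivity) (by linarith)]
    rw [hAdef] at hquad
    linear_combination -hquad
  linarith

theorem lensQ_unique (m k a b w σ q : ℝ) (hm : 0 < m) (hk : 0 < k) (ha : 0 < a) (hb : 0 < b)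
    (hK : 0 < k * b ^ 2 - k ^ 2 * a ^ 2) (hw : 0 < w) (hσ : 0 ≤ σ)
    (h : m * w * q = b * Real.sqrt (k + m * (q ^ 2 * σ)) + k * a) :
    0 < lensA m b (w, σ) ∧ q = lensQ m k a b (w, σ) := by
  set s := Real.sqrt (k + m * (q ^ 2 * σ)) with hs
  have hs2 : s ^ 2 = k + m * (q ^ 2 * σ) := Real.sq_sqrt (by positivity)
  have hs0 : 0 ≤ s := Real.sqrt_nonneg _
  have hq : 0 < q := by
    have : 0 < (m * w) * q := by rw [h]; positivity
    exact pos_of_mul_pos_right this (by positivity)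
  have hquad : (m ^ 2 * w ^ 2 - b ^ 2 * m * σ) * q ^ 2 - 2 * (m * w * k * a) * q
      - (k * b ^ 2 - k ^ 2 * a ^ 2) = 0 := by
    have : (m * w * q - k * a) ^ 2 = b ^ 2 * s ^ 2 := by rw [h]; ring
    rw [hs2] at this
    linear_combination this
  have hA : 0 < lensA m b (w, σ) := by
    have : 0 < (m ^ 2 * w ^ 2 - b ^ 2 * m * σ) * q ^ 2 := by
      have : 0 < m * w * k * a * q := by positivity
      linarith
    exact pos_of_mul_pos_left this (by positivity)
  refine ⟨hA, ?_⟩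
  have hAdef : lensA m b (w, σ) = m ^ 2 * w ^ 2 - b ^ 2 * m * σ := rfl
  rw [← hAdef] at hquad
  change q = (m * w * k * a + Real.sqrt ((m * w * k * a) ^ 2 +
    lensA m b (w, σ) * (k * b ^ 2 - k ^ 2 * a ^ 2))) / lensA m b (w, σ)
  generalize lensA m b (w, σ) = A at *
  have hcc : 0 < m * w * k * a := by positivity
  generalize m * w * k * a = c at *
  have hge : c ≤ A * q := by
    have : 0 < q * (A * q - 2 * c) := by nlinarith
    have := pos_of_mul_pos_right this hq.le
    linarith
  have : Real.sqrt (c ^ 2 + A * (k * b ^ 2 - k ^ 2 * a ^ 2)) = A * q - c := by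
    have := mul_pos hA hK
    rw [Real.sqrt_eq_iff_mul_self_eq (by positivity) (by linarith)]
    linear_combination -A * hquad
  rw [this]; field_simp; ring

theorem norm2_sq (g : Fin 2 → ℝ) : norm2 g ^ 2 = dot2 g g := by
  unfold norm2
  exact Real.sq_sqrt (by unfold dot2; nlinarith [mul_self_nonneg (g 0), mul_self_nonneg (g 1)])

theorem dot2_self_nonneg (g : Fin 2 → ℝ) : 0 ≤ dot2 g g := by
  unfold dot2; nlinarith [mul_self_nonneg (g 0), mul_self_nonneg (g 1)]

theorem dot2_smul_self (c : ℝ) (g : Fin 2 → ℝ) : dot2 (c • g) (c • g) = c ^ 2 * dot2 g g := by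
  simp only [dot2, Pi.smul_apply, smul_eq_mul]; ring

theorem lens_eq_iff (m k a b w : ℝ) (hm : 0 < m) (hk : 0 < k) (ha : 0 < a) (hb : 0 < b)
    (hK : 0 < k * b ^ 2 - k ^ 2 * a ^ 2) (hw : 0 < w) (g s : Fin 2 → ℝ) :
    ((-w) / (b * Real.sqrt (k + m * norm2 g ^ 2) + k * a)) • g = m⁻¹ • s ↔
    0 < lensA m b (w, dot2 s s) ∧ g = (-(lensQ m k a b (w, dot2 s s))) • s := by
  rw [norm2_sq]
  constructor
  · intro h
    set D := b * Real.sqrt (k + m * dot2 g g) + k * a with hD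
    have hDpos : 0 < D := by positivity
    have hg : g = (-(D / (m * w))) • s := by
      have : (-(D / w)) • (((-w) / D) • g) = (-(D / w)) • (m⁻¹ • s) := by rw [h]
      rw [smul_smul, smul_smul] at this
      have e : -(D / w) * (-w / D) = 1 := by field_simp
      rw [e, one_smul] at this
      rw [this]; congr 1; field_simp
    have hu := lensQ_unique m k a b w (dot2 s s) (D / (m * w)) hm hk ha hb hK hw
      (dot2_self_nonneg s) (by
        have : dot2 g g = (D / (m * w)) ^ 2 * dot2 s s := by
          conv_lhs => rw [hg, dot2_smul_self, neg_sq]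
        rw [← this, ← hD]; field_simp)
    exact ⟨hu.1, by rw [← hu.2]; exact hg⟩
  · rintro ⟨hA, hg⟩
    obtain ⟨hq, hs⟩ := lensQ_spec m k a b w (dot2 s s) hm hk ha hb hK hw (dot2_self_nonneg s) hA
    set q := lensQ m k a b (w, dot2 s s)
    have e : dot2 g g = q ^ 2 * dot2 s s := by rw [hg, dot2_smul_self, neg_sq]
    rw [e, ← hs, hg, smul_smul]
    congr 1; field_simp

/-- the identification of the plane with its dual -/
noncomputable def lensDual : (Fin 2 → ℝ) →L[ℝ] ((Fin 2 → ℝ) →L[ℝ] ℝ) :=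
  (ContinuousLinearMap.proj (R := ℝ) (φ := fun _ : Fin 2 => ℝ) 0).smulRight
    (ContinuousLinearMap.proj (R := ℝ) (φ := fun _ : Fin 2 => ℝ) 0) +
  (ContinuousLinearMap.proj (R := ℝ) (φ := fun _ : Fin 2 => ℝ) 1).smulRight
    (ContinuousLinearMap.proj (R := ℝ) (φ := fun _ : Fin 2 => ℝ) 1)

theorem lensDual_apply (s h : Fin 2 → ℝ) : lensDual s h = s 0 * h 0 + s 1 * h 1 := by
  simp [lensDual]

theorem plane_eq (h : Fin 2 → ℝ) :
    h = h 0 • (Pi.single 0 1 : Fin 2 → ℝ) + h 1 • (Pi.single 1 1 : Fin 2 → ℝ) := by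
  ext i; fin_cases i <;> simp

theorem clm_plane {F : Type*} [NormedAddCommGroup F] [NormedSpace ℝ F]
    (L : (Fin 2 → ℝ) →L[ℝ] F) (h : Fin 2 → ℝ) :
    L h = h 0 • L (Pi.single 0 1) + h 1 • L (Pi.single 1 1) := by
  conv_lhs => rw [plane_eq h, map_add, map_smul, map_smul]

theorem grad2_eq_iff (u : (Fin 2 → ℝ) → ℝ) (x g : Fin 2 → ℝ) :
    grad2 u x = g ↔ fderiv ℝ u x = lensDual g := by
  constructor
  · rintro rfl
    ext h
    rw [clm_plane, lensDual_apply]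
    simp [grad2, pd, mul_comm]
  · intro h
    ext i
    fin_cases i <;> simp [grad2, pd, h, lensDual_apply]

theorem lens_symm (S : (Fin 2 → ℝ) → (Fin 2 → ℝ)) (x : Fin 2 → ℝ)
    (hS : DifferentiableAt ℝ S x) (hcurl : curl2 S x = 0)
    (hcross : cross2v (S x) (grad2 (fun y => norm2 (S y) ^ 2) x) = 0)
    (Q : ℝ × ℝ → ℝ) (v : (Fin 2 → ℝ) → ℝ) (c a C : ℝ)
    (hv : HasFDerivAt v (c • lensDual (S x)) x)
    (hQ : DifferentiableAt ℝ Q (-(a * v x + C), dot2 (S x) (S x))) :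
    DifferentiableAt ℝ (fun y => (-(Q (-(a * v y + C), dot2 (S y) (S y)))) • lensDual (S y)) x ∧
    ∀ h1 h2, fderiv ℝ (fun y => (-(Q (-(a * v y + C), dot2 (S y) (S y)))) • lensDual (S y)) x h1 h2
      = fderiv ℝ (fun y => (-(Q (-(a * v y + C), dot2 (S y) (S y)))) • lensDual (S y)) x h2 h1 := by
  have hS0 : DifferentiableAt ℝ (fun y => S y 0) x := by fun_prop
  have hS1 : DifferentiableAt ℝ (fun y => S y 1) x := by fun_prop
  have hσ : DifferentiableAt ℝ (fun y => dot2 (S y) (S y)) x := by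
    unfold dot2; fun_prop
  set σ' := fderiv ℝ (fun y => dot2 (S y) (S y)) x with hσ'
  have hw : HasFDerivAt (fun y => -(a * v y + C)) (-(a • (c • lensDual (S x)))) x :=
    ((hv.const_mul a).add_const C).neg
  have hQ' := (hQ.hasFDerivAt.comp x (hw.prodMk hσ.hasFDerivAt)).neg
  have hD : HasFDerivAt (fun y => lensDual (S y)) (lensDual.comp (fderiv ℝ S x)) x :=
    lensDual.hasFDerivAt.comp x hS.hasFDerivAt
  have hω := hQ'.smul hD
  have hfd := hω.fderiv
  refine ⟨hω.differentiableAt, ?_⟩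
  have hp0 : ∀ i j, pd i (fun y => S y j) x = fderiv ℝ S x (Pi.single i 1) j := by
    intro i j
    unfold pd
    have := (hasFDerivAt_pi'.1 hS.hasFDerivAt) j
    rw [this.fderiv]; rfl
  have hc : fderiv ℝ S x (Pi.single 0 1) 1 = fderiv ℝ S x (Pi.single 1 1) 0 := by
    unfold curl2 at hcurl
    rw [hp0, hp0] at hcurl
    linarith
  have hx : S x 0 * σ' (Pi.single 1 1) - S x 1 * σ' (Pi.single 0 1) = 0 := by
    simp only [norm2_sq] at hcross
    simpa [cross2v, grad2, pd] using hcross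
  set Q' := fderiv ℝ Q (-(a * v x + C), dot2 (S x) (S x)) with hQd
  have hQlin : ∀ p q : ℝ, Q' (p, q) = p * Q' (1, 0) + q * Q' (0, 1) := by
    intro p q
    have : ((p, q) : ℝ × ℝ) = p • ((1, 0) : ℝ × ℝ) + q • ((0, 1) : ℝ × ℝ) := by simp
    rw [this, map_add, map_smul, map_smul]; rfl
  intro h1 h2
  have key : ∀ h1 h2, fderiv ℝ (fun y => (-(Q (-(a * v y + C), dot2 (S y) (S y)))) •
      lensDual (S y)) x h1 h2 =
      (-(Q (-(a * v x + C), dot2 (S x) (S x)))) *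
        (fderiv ℝ S x h1 0 * h2 0 + fderiv ℝ S x h1 1 * h2 1) +
      (-(Q' (-(a * (c * (S x 0 * h1 0 + S x 1 * h1 1))), σ' h1))) *
        (S x 0 * h2 0 + S x 1 * h2 1) := by
    intro h1 h2
    have := congrArg (fun L => L h1 h2) hfd
    refine this.trans ?_
    simp [lensDual_apply, hσ']
  rw [key, key, hQlin _ (σ' h1), hQlin _ (σ' h2)]
  rw [clm_plane (fderiv ℝ S x) h1, clm_plane (fderiv ℝ S x) h2, clm_plane σ' h1, clm_plane σ' h2]
  simp only [Pi.add_apply, Pi.smul_apply, smul_eq_mul]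
  linear_combination (-(Q (-(a * v x + C), dot2 (S x) (S x)))) * (h1 0 * h2 1 - h2 0 * h1 1) * hc
    + Q' (0, 1) * (h1 0 * h2 1 - h2 0 * h1 1) * hx

/-- Theorem 6.1. Local existence and uniqueness of the lower lens
surface for the imaging problem when `n₁ > n₃`. -/
theorem imaging_local_existence_uniqueness (κ1 κ2 C : ℝ)
    (hκ1 : 1 < κ1) (hκ2 : 0 < κ2) (hκ2' : κ2 < 1) (hκκ : κ1 * κ2 < 1) (hC : C < 0)
    (Ω : Set (Fin 2 → ℝ)) (hΩ : IsOpen Ω) (hsc : SimplyConnectedSpace Ω)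
    (x0 : Fin 2 → ℝ) (hx0 : x0 ∈ Ω)
    (S : (Fin 2 → ℝ) → (Fin 2 → ℝ)) (hS : ContDiffOn ℝ 1 S Ω)
    (hbound : norm2 (S x0) < -C * Real.sqrt (κ1 ^ 2 - 1) / (κ1 * (κ1 - κ2)))
    (hcond : ∀ᶠ x in nhds x0,
        curl2 S x = 0 ∧ cross2v (S x) (grad2 (fun y => norm2 (S y) ^ 2) x) = 0) :
    ∀ δ0 : ℝ, 0 < δ0 →
      δ0 < (1 - κ1 * κ2)⁻¹ *
          (-C - κ1 * (κ1 - κ2) / Real.sqrt (κ1 ^ 2 - 1) * norm2 (S x0)) →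
      ∃ U : Set (Fin 2 → ℝ), IsOpen U ∧ x0 ∈ U ∧ U ⊆ Ω ∧
        ∃ u : (Fin 2 → ℝ) → ℝ, IsLensSolution κ1 κ2 C S U x0 δ0 u ∧
          ∀ u' : (Fin 2 → ℝ) → ℝ, IsLensSolution κ1 κ2 C S U x0 δ0 u' →
            Set.EqOn u' u U := by
  intro δ0 hδ0 hδ
  have ha : 0 < 1 - κ1 * κ2 := by linarith
  have hm : 0 < κ1 ^ 2 - 1 := by nlinarith
  have hk : 0 < κ1 ^ 2 := by positivity
  have hb : 0 < κ1 ^ 2 - κ1 * κ2 := by nlinarith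
  have hK : 0 < κ1 ^ 2 * (κ1 ^ 2 - κ1 * κ2) ^ 2 - (κ1 ^ 2) ^ 2 * (1 - κ1 * κ2) ^ 2 := by
    have h1 : 0 < (κ1 ^ 2) ^ 2 * ((κ1 ^ 2 - 1) * (1 - κ2 ^ 2)) := by
      have : 0 < 1 - κ2 ^ 2 := by nlinarith
      positivity
    calc 0 < _ := h1
      _ = _ := by ring
  have hw0 : κ1 * (κ1 - κ2) / Real.sqrt (κ1 ^ 2 - 1) * norm2 (S x0)
      < -((1 - κ1 * κ2) * δ0 + C) := by
    rw [inv_mul_eq_div, lt_div_iff₀ ha] at hδ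
    linarith
  have hbe : κ1 * (κ1 - κ2) = κ1 ^ 2 - κ1 * κ2 := by ring
  rw [hbe] at hw0
  have hiff := lens_eq_iff (κ1 ^ 2 - 1) (κ1 ^ 2) (1 - κ1 * κ2) (κ1 ^ 2 - κ1 * κ2)
  have hQc := lensQ_contDiffAt (κ1 ^ 2 - 1) (κ1 ^ 2) (1 - κ1 * κ2) (κ1 ^ 2 - κ1 * κ2) hK
  unfold IsLensSolution
  generalize κ1 ^ 2 - κ1 * κ2 = b at *
  generalize κ1 ^ 2 - 1 = m at *
  generalize 1 - κ1 * κ2 = a at *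
  generalize κ1 ^ 2 = k at *
  have hn0 : 0 ≤ norm2 (S x0) := Real.sqrt_nonneg _
  have hsm : 0 < Real.sqrt m := Real.sqrt_pos.2 hm
  have hw0pos : 0 < -(a * δ0 + C) := lt_of_le_of_lt (by positivity) hw0
  have hA0 : 0 < lensA m b (-(a * δ0 + C), dot2 (S x0) (S x0)) := by
    rw [div_mul_eq_mul_div, div_lt_iff₀ hsm] at hw0
    have h1 := mul_self_lt_mul_self (by positivity) hw0
    have h2 : Real.sqrt m ^ 2 = m := Real.sq_sqrt hm.le
    have h3 : b ^ 2 * dot2 (S x0) (S x0) < (-(a * δ0 + C)) ^ 2 * m := by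
      rw [← norm2_sq, ← h2]; nlinarith
    have h4 := mul_lt_mul_of_pos_left h3 hm
    unfold lensA
    simp only
    nlinarith
  let G : (Fin 2 → ℝ) × ℝ → (Fin 2 → ℝ) →L[ℝ] ℝ := fun p =>
    (-(lensQ m k a b (-(a * p.2 + C), dot2 (S p.1) (S p.1)))) • lensDual (S p.1)
  have hSat : ∀ x ∈ Ω, ContDiffAt ℝ 1 S x := fun x hx => hS.contDiffAt (hΩ.mem_nhds hx)
  have hinner : ∀ x ∈ Ω, ∀ y : ℝ, ContDiffAt ℝ 1
      (fun p : (Fin 2 → ℝ) × ℝ => (-(a * p.2 + C), dot2 (S p.1) (S p.1))) (x, y) := by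
    intro x hx y
    have h1 : ContDiffAt ℝ 1 (fun p : (Fin 2 → ℝ) × ℝ => S p.1) (x, y) :=
      (hSat x hx).comp (x, y) contDiffAt_fst
    have h2 := contDiffAt_pi.1 h1
    refine ContDiffAt.prodMk (by fun_prop) ?_
    unfold dot2
    exact ((h2 0).mul (h2 0)).add ((h2 1).mul (h2 1))
  have hGc : ∀ x ∈ Ω, ∀ y : ℝ, 0 < lensA m b (-(a * y + C), dot2 (S x) (S x)) →
      ContDiffAt ℝ 1 G (x, y) := by
    intro x hx y hA
    have h1 : ContDiffAt ℝ 1 (fun p : (Fin 2 → ℝ) × ℝ => S p.1) (x, y) :=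
      (hSat x hx).comp (x, y) contDiffAt_fst
    have h2 : ContDiffAt ℝ 1 (fun p : (Fin 2 → ℝ) × ℝ => lensDual (S p.1)) (x, y) :=
      lensDual.contDiff.contDiffAt.comp (x, y) h1
    have h3 : ContDiffAt ℝ 1 (fun p : (Fin 2 → ℝ) × ℝ =>
        -(lensQ m k a b (-(a * p.2 + C), dot2 (S p.1) (S p.1)))) (x, y) :=
      (ContDiffAt.comp (x, y) (hQc _ hA) (hinner x hx y)).neg
    exact h3.smul h2
  obtain ⟨K, t, ht, hLip⟩ := (hGc x0 hx0 δ0 hA0).exists_lipschitzOnWith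
  have e1 : ∀ᶠ p : (Fin 2 → ℝ) × ℝ in nhds (x0, δ0), p.1 ∈ Ω :=
    continuousAt_fst.eventually (hΩ.mem_nhds hx0)
  have e2 : ∀ᶠ p : (Fin 2 → ℝ) × ℝ in nhds (x0, δ0), curl2 S p.1 = 0 ∧
      cross2v (S p.1) (grad2 (fun y => norm2 (S y) ^ 2) p.1) = 0 :=
    (continuousAt_fst (p := (x0, δ0))).eventually hcond
  have e3 : ∀ᶠ p : (Fin 2 → ℝ) × ℝ in nhds (x0, δ0), 0 < p.2 :=
    continuousAt_snd.eventually (lt_mem_nhds hδ0)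
  have e4 : ∀ᶠ p : (Fin 2 → ℝ) × ℝ in nhds (x0, δ0), 0 < -(a * p.2 + C) := by
    have : ContinuousAt (fun p : (Fin 2 → ℝ) × ℝ => -(a * p.2 + C)) (x0, δ0) := by fun_prop
    exact this.eventually (lt_mem_nhds hw0pos)
  have e5 : ∀ᶠ p : (Fin 2 → ℝ) × ℝ in nhds (x0, δ0),
      0 < lensA m b (-(a * p.2 + C), dot2 (S p.1) (S p.1)) := by
    have hc : Continuous (lensA m b) := by unfold lensA; fun_prop
    have : ContinuousAt (fun p : (Fin 2 → ℝ) × ℝ =>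
        lensA m b (-(a * p.2 + C), dot2 (S p.1) (S p.1))) (x0, δ0) :=
      ContinuousAt.comp (x := (x0, δ0)) hc.continuousAt (hinner x0 hx0 δ0).continuousAt
    exact this.eventually (lt_mem_nhds hA0)
  have e6 : ∀ᶠ p : (Fin 2 → ℝ) × ℝ in nhds (x0, δ0), ‖G p‖ < ‖G (x0, δ0)‖ + 1 :=
    (hGc x0 hx0 δ0 hA0).continuousAt.norm.eventually (gt_mem_nhds (lt_add_one _))
  obtain ⟨ρ, hρ, hball⟩ := Metric.eventually_nhds_iff_ball.1
    (e1.and (e2.and (e3.and (e4.and (e5.and (e6.and ht))))))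
  have hK0 : (0:ℝ) ≤ K := K.2
  obtain ⟨M, hMdef⟩ : ∃ M, M = ‖G (x0, δ0)‖ + 1 := ⟨_, rfl⟩
  have hMpos : 0 < M := by rw [hMdef]; positivity
  obtain ⟨r, hr, hrρ, hMr, hKr⟩ : ∃ r : ℝ, 0 < r ∧ r < ρ ∧ M * r ≤ ρ / 2 ∧ K * r ≤ 1 / 2 := by
    refine ⟨min (ρ / 2) (min (ρ / 2 / M) (1 / (2 * (K + 1)))), by positivity, ?_, ?_, ?_⟩
    · exact lt_of_le_of_lt (min_le_left _ _) (by linarith)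
    · rw [mul_comm, ← le_div_iff₀ hMpos]
      exact (min_le_right _ _).trans (min_le_left _ _)
    · have : min (ρ / 2) (min (ρ / 2 / M) (1 / (2 * ((K:ℝ) + 1)))) ≤ 1 / (2 * (K + 1)) :=
        (min_le_right _ _).trans (min_le_right _ _)
      calc _ ≤ (K:ℝ) * (1 / (2 * (K + 1))) := mul_le_mul_of_nonneg_left this hK0
        _ ≤ 1 / 2 := by
          rw [mul_one_div, div_le_div_iff₀ (by positivity) (by positivity)]; linarith
  have hmem : ∀ x ∈ Metric.ball x0 r, ∀ y, |y - δ0| ≤ ρ / 2 →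
      (x, y) ∈ Metric.ball (x0, δ0) ρ := by
    intro x hx y hy
    rw [Metric.mem_ball, Prod.dist_eq]
    refine max_lt ((Metric.mem_ball.1 hx).trans hrρ) ?_
    rw [Real.dist_eq]; linarith
  have hδself : |δ0 - δ0| ≤ ρ / 2 := by rw [sub_self, abs_zero]; positivity
  have hUΩ : Metric.ball x0 r ⊆ Ω := fun x hx => (hball _ (hmem x hx δ0 hδself)).1
  obtain ⟨u, hu0, hu⟩ := lens_exist (fun x y => G (x, y)) x0 δ0 r (ρ / 2) M K hr (by positivity)
    hMpos.le hK0 (fun v => ∀ x ∈ Metric.ball x0 r, ∃ c : ℝ, HasFDerivAt v (c • lensDual (S x)) x)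
    (fun x _ => ⟨0, by rw [zero_smul]; exact hasFDerivAt_const δ0 x⟩)
    (by
      intro v hPv hv
      have hs : ∀ x ∈ Metric.ball x0 r, DifferentiableAt ℝ (fun y => G (y, v y)) x ∧
          ∀ h1 h2, fderiv ℝ (fun y => G (y, v y)) x h1 h2 =
            fderiv ℝ (fun y => G (y, v y)) x h2 h1 := fun x hx => by
        obtain ⟨c, hc⟩ := hPv x hx
        obtain ⟨b1, b2, b3, b4, b5, b6, b7⟩ := hball _ (hmem x hx (v x) (hv x hx))
        exact lens_symm S x ((hSat x b1).differentiableAt one_ne_zero) b2.1 b2.2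
          (lensQ m k a b) v c a C hc ((hQc _ b5).differentiableAt one_ne_zero)
      obtain ⟨f, hf⟩ := (convex_ball x0 r).exists_forall_hasFDerivAt_of_fderiv_symmetric
        Metric.isOpen_ball (fun x hx => (hs x hx).1.differentiableWithinAt)
        (fun x hx => (hs x hx).2)
      refine ⟨fun x => f x + (δ0 - f x0), fun x hx => ⟨_, (hf x hx).add_const _⟩, by ring,
        fun x hx => (hf x hx).add_const _⟩)
    (fun x hx y hy => by
      rw [hMdef]
      exact (hball _ (hmem x hx y hy)).2.2.2.2.2.1.le) hMr
    (fun x hx y y' hy hy' => by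
      have h := hLip.norm_sub_le (hball _ (hmem x hx y hy)).2.2.2.2.2.2
        (hball _ (hmem x hx y' hy')).2.2.2.2.2.2
      have e : ‖(x, y) - (x, y')‖ = |y - y'| := by simp [Prod.norm_def]
      rwa [e] at h) hKr
  have hGe : ∀ x y, G (x, y) =
      lensDual ((-(lensQ m k a b (-(a * y + C), dot2 (S x) (S x)))) • S x) := by
    intro x y
    rw [map_smul]
  have hub : ∀ x ∈ Metric.ball x0 r, _ := fun x hx => hball _ (hmem x hx (u x) (hu x hx).1)
  have hneg : ∀ y : ℝ, a * y + C = -(-(a * y + C)) := fun y => by ring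
  refine ⟨Metric.ball x0 r, Metric.isOpen_ball, Metric.mem_ball_self hr, hUΩ, u,
    ⟨?_, hu0, ?_, ?_⟩, ?_⟩
  · have hd : DifferentiableOn ℝ u (Metric.ball x0 r) := fun x hx =>
      (hu x hx).2.differentiableAt.differentiableWithinAt
    have hfd : ∀ x ∈ Metric.ball x0 r, fderiv ℝ u x = G (x, u x) := fun x hx => (hu x hx).2.fderiv
    have hc1 : ContDiffOn ℝ 1 u (Metric.ball x0 r) := by
      rw [← zero_add (1 : WithTop ℕ∞), contDiffOn_succ_iff_fderiv_of_isOpen Metric.isOpen_ball,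
        contDiffOn_zero]
      refine ⟨hd, by simp, ContinuousOn.congr (fun x hx => ?_) hfd⟩
      have hcu := (hu x hx).2.continuousAt
      exact (ContinuousAt.comp (f := fun x => (x, u x)) (x := x)
        (hGc x (hUΩ hx) (u x) (hub x hx).2.2.2.2.1).continuousAt
        (continuousAt_id.prodMk hcu)).continuousWithinAt
    have : ContDiffOn ℝ (1 + 1) u (Metric.ball x0 r) := by
      rw [contDiffOn_succ_iff_fderiv_of_isOpen Metric.isOpen_ball]
      refine ⟨hd, by simp, ContDiffOn.congr (fun x hx => ?_) hfd⟩
      have hcu := hc1.contDiffAt (Metric.isOpen_ball.mem_nhds hx)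
      exact (ContDiffAt.comp (f := fun x => (x, u x)) x
        (hGc x (hUΩ hx) (u x) (hub x hx).2.2.2.2.1)
        (contDiffAt_id.prodMk hcu)).contDiffWithinAt
    rwa [one_add_one_eq_two] at this
  · intro x hx
    rw [hneg, hiff _ hm hk ha hb hK (hub x hx).2.2.2.1]
    refine ⟨(hub x hx).2.2.2.2.1, ?_⟩
    rw [grad2_eq_iff, ← hGe]
    exact (hu x hx).2.fderiv
  · intro x hx
    have h4 := (hub x hx).2.2.2.1
    exact ⟨(hub x hx).2.2.1, by rw [lt_div_iff₀ ha]; simp only at h4; linarith⟩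
  · rintro u' ⟨hc', h0', heq', hb'⟩
    have hall : ∀ x ∈ Metric.ball x0 r, 0 < lensA m b (-(a * u' x + C), dot2 (S x) (S x)) ∧
        fderiv ℝ u' x = G (x, u' x) := by
      intro x hx
      have hwx : 0 < -(a * u' x + C) := by
        have := (hb' x hx).2
        rw [lt_div_iff₀ ha] at this
        linarith
      have h := heq' x hx
      rw [hneg, hiff _ hm hk ha hb hK hwx, grad2_eq_iff, ← hGe] at h
      exact h
    refine lens_unique G (Metric.ball x0 r) Metric.isOpen_ball
      (convex_ball x0 r).isPreconnected x0 (Metric.mem_ball_self hr) u' u (h0'.trans hu0.symm)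
      (fun x hx => hGc x (hUΩ hx) _ (hall x hx).1) (fun x hx => ?_) (fun x hx => (hu x hx).2)
    rw [← (hall x hx).2]
    exact ((hc'.contDiffAt (Metric.isOpen_ball.mem_nhds hx)).differentiableAt
      two_ne_zero).hasFDerivAt
end

section
/- (Theorem 8.1, analytic form.) Let $\Omega\subseteq\mathbb{R}^2$ be open and simply connected, let $S:\Omega\to\mathbb{R}^2$ be $C^1$, and let $C\ne 0$ be a constant. Then: (i) there exists a $C^2$ function $u:\Omega\to\mathbb{R}$ with $\nabla u = S/C$ on $\Omega$ if and only if $\mathrm{curl}\,S = 0$ on $\Omega$; and (ii) for any such $u$, defining $m_1(x) = \left(\dfrac{2\nabla u(x)}{1+|\nabla u(x)|^2},\; 1-\dfrac{2}{1+|\nabla u(x)|^2}\right)$, $d(x) = \dfrac{C}{1-m_1(x)\cdot(0,0,1)}$, and $f(x)=(x,u(x))+d(x)\,m_1(x)$, the first two components of $f$ satisfy $(f_1(x),f_2(x)) = x + S x$ for all $x\in\Omega$. -/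
/-- The reals with the discrete topology. -/
def DReal : Type := ℝ

instance : TopologicalSpace DReal := ⊥

instance : DiscreteTopology DReal := discreteTopology_bot _

/-- The covering of `X` attached to a family of local primitives. -/
noncomputable def primCore {X : Type} [TopologicalSpace X] (U : X → Set X) (F : X → X → ℝ)
    (hU : ∀ i, IsOpen (U i)) (hmem : ∀ i, i ∈ U i)
    (hF : ∀ i j, ∃ c : ℝ, ∀ x ∈ U i ∩ U j, F i x - F j x = c) :
    FiberBundleCore X X DReal where
  baseSet := U
  isOpen_baseSet := hU
  indexAt := id
  mem_baseSet_at := hmem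
  coordChange i j x v := ((show ℝ from v) + (F i x - F j x) : ℝ)
  coordChange_self i x hx v := by
    show ((show ℝ from v) + (F i x - F i x) : ℝ) = (show ℝ from v)
    rw [sub_self]; exact add_zero (M := ℝ) v
  continuousOn_coordChange i j := by
    obtain ⟨c, hc⟩ := hF i j
    have h1 : Continuous (fun p : X × DReal =>
        (show DReal from ((show ℝ from p.2) + c : ℝ))) :=
      (continuous_of_discreteTopology
        (f := fun v : DReal => (show DReal from ((show ℝ from v) + c : ℝ)))).comp continuous_snd
    refine h1.continuousOn.congr ?_
    rintro ⟨x, v⟩ hx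
    show ((show ℝ from v) + (F i x - F j x) : ℝ) = ((show ℝ from v) + c : ℝ)
    rw [hc x hx.1]
  coordChange_comp i j k x hx v := by
    show (((show ℝ from v) + (F i x - F j x)) + (F j x - F k x) : ℝ)
      = ((show ℝ from v) + (F i x - F k x) : ℝ)
    ring

theorem exists_global_prim {X : Type} [TopologicalSpace X] [SimplyConnectedSpace X]
    [LocallyPathConnectedSpace X] (U : X → Set X) (F : X → X → ℝ)
    (hU : ∀ i, IsOpen (U i)) (hmem : ∀ i, i ∈ U i)
    (hF : ∀ i j, ∃ c : ℝ, ∀ x ∈ U i ∩ U j, F i x - F j x = c) :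
    ∃ u : X → ℝ, ∀ i, ∃ c : ℝ, ∀ᶠ x in nhds i, u x = F i x + c := by
  let Z := primCore U F hU hmem hF
  have hcov : IsCoveringMap (Bundle.TotalSpace.proj : Z.TotalSpace → X) :=
    FiberBundle.isCoveringMap (F := DReal) (E := Z.Fiber)
  obtain ⟨a₀⟩ : Nonempty X := inferInstance
  obtain ⟨s, ⟨-, hs⟩, -⟩ := hcov.existsUnique_continuousMap_lifts (ContinuousMap.id X) a₀
    (⟨a₀, (show DReal from (0 : ℝ))⟩ : Z.TotalSpace) rfl
  have hs' : ∀ x, (s x).1 = x := fun x => congrFun hs x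
  refine ⟨fun x => (show ℝ from (s x).2) + F x x, fun i => ?_⟩
  have hcoord : ∀ x, ((Z.localTriv i) (s x)).2
      = (show DReal from (((show ℝ from (s x).2) + F x x) - F i x : ℝ)) := by
    intro x
    show ((show ℝ from (s x).2) + (F (s x).1 (s x).1 - F i (s x).1) : ℝ)
      = (((show ℝ from (s x).2) + F x x) - F i x : ℝ)
    rw [hs' x]; ring
  have hcont : ContinuousAt (fun x => ((Z.localTriv i) (s x)).2) i := by
    have h1 : ContinuousAt (Z.localTriv i) (s i) := by
      apply (Z.localTriv i).continuousAt
      rw [(Z.localTriv i).mem_source]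
      show (s i).1 ∈ U i
      rw [hs']; exact hmem i
    exact continuous_snd.continuousAt.comp (h1.comp s.continuous.continuousAt)
  have hev := hcont.eventually (show ∀ᶠ v in nhds ((Z.localTriv i) (s i)).2,
      v = ((Z.localTriv i) (s i)).2 by rw [nhds_discrete]; simp)
  refine ⟨(show ℝ from ((Z.localTriv i) (s i)).2), ?_⟩
  filter_upwards [hev] with x hx
  rw [hcoord x] at hx
  have hx' : ((show ℝ from (s x).2) + F x x) - F i x
    = (show ℝ from ((Z.localTriv i) (s i)).2) := hx
  linarith

/-- Poincaré lemma on simply connected open sets. -/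
theorem exists_prim_of_closed {E : Type} [NormedAddCommGroup E] [NormedSpace ℝ E]
    (Ω : Set E) (hΩ : IsOpen Ω) (hsc : SimplyConnectedSpace Ω)
    (w : E → E →L[ℝ] ℝ) (hw : DifferentiableOn ℝ w Ω)
    (hsymm : ∀ a ∈ Ω, ∀ x y, fderiv ℝ w a x y = fderiv ℝ w a y x) :
    ∃ u : E → ℝ, ∀ a ∈ Ω, HasFDerivAt u (w a) a := by
  classical
  have hloc : ∀ a : Ω, ∃ r > 0, Metric.ball (a : E) r ⊆ Ω := fun a =>
    Metric.isOpen_iff.1 hΩ a a.2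
  choose r hr hball using hloc
  have hex : ∀ a : Ω, ∃ f : E → ℝ, ∀ b ∈ Metric.ball (a : E) (r a), HasFDerivAt f (w b) b :=
    fun a => (convex_ball (a : E) (r a)).exists_forall_hasFDerivAt_of_fderiv_symmetric
      Metric.isOpen_ball (hw.mono (hball a)) (fun b hb => hsymm b (hball a hb))
  choose f hf using hex
  have := hΩ.locallyPathConnectedSpace
  obtain ⟨u, hu⟩ := exists_global_prim (X := Ω)
    (fun a => Subtype.val ⁻¹' Metric.ball (a : E) (r a)) (fun a x => f a x)
    (fun a => Metric.isOpen_ball.preimage continuous_subtype_val)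
    (fun a => Metric.mem_ball_self (hr a)) (by
      intro i j
      have hconv : Convex ℝ (Metric.ball (i : E) (r i) ∩ Metric.ball (j : E) (r j)) :=
        (convex_ball _ _).inter (convex_ball _ _)
      have ho : IsOpen (Metric.ball (i : E) (r i) ∩ Metric.ball (j : E) (r j)) :=
        Metric.isOpen_ball.inter Metric.isOpen_ball
      have hd : ∀ x ∈ Metric.ball (i : E) (r i) ∩ Metric.ball (j : E) (r j),
          HasFDerivAt (fun y => f i y - f j y) (0 : E →L[ℝ] ℝ) x := by
        intro x hx
        have h := (hf i x hx.1).sub (hf j x hx.2)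
        rw [sub_self] at h
        exact h
      obtain ⟨c, hc⟩ := ho.exists_is_const_of_fderiv_eq_zero hconv.isPreconnected
        (fun x hx => (hd x hx).differentiableAt.differentiableWithinAt)
        (fun x hx => (hd x hx).fderiv)
      exact ⟨c, fun x hx => hc x hx⟩)
  refine ⟨fun x => if h : x ∈ Ω then u ⟨x, h⟩ else 0, fun a ha => ?_⟩
  obtain ⟨c, hc⟩ := hu ⟨a, ha⟩
  refine ((hf ⟨a, ha⟩ a (Metric.mem_ball_self (hr _))).add_const c).congr_of_eventuallyEq ?_
  rw [nhds_subtype_eq_comap, Filter.eventually_comap] at hc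
  filter_upwards [hc, hΩ.mem_nhds ha] with x hx hxΩ
  simp only [hxΩ, dif_pos]
  exact hx ⟨x, hxΩ⟩ rfl

theorem vec_decomp (v : Fin 2 → ℝ) :
    v = v 0 • (Pi.single 0 1 : Fin 2 → ℝ) + v 1 • (Pi.single 1 1 : Fin 2 → ℝ) := by
  ext i; fin_cases i <;> simp

/-- The 1-form of a plane field. -/
noncomputable def form2 (V : (Fin 2 → ℝ) → (Fin 2 → ℝ)) (x : Fin 2 → ℝ) : (Fin 2 → ℝ) →L[ℝ] ℝ :=
  V x 0 • ContinuousLinearMap.proj (R := ℝ) (φ := fun _ : Fin 2 => ℝ) 0 +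
  V x 1 • ContinuousLinearMap.proj (R := ℝ) (φ := fun _ : Fin 2 => ℝ) 1

theorem form2_apply (V : (Fin 2 → ℝ) → (Fin 2 → ℝ)) (x v : Fin 2 → ℝ) :
    form2 V x v = V x 0 * v 0 + V x 1 * v 1 := by
  simp [form2]

theorem exists_potential (Ω : Set (Fin 2 → ℝ)) (hΩ : IsOpen Ω) (hsc : SimplyConnectedSpace Ω)
    (V : (Fin 2 → ℝ) → (Fin 2 → ℝ)) (hV : ContDiffOn ℝ 1 V Ω)
    (hcurl : ∀ x ∈ Ω, curl2 V x = 0) :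
    ∃ u : (Fin 2 → ℝ) → ℝ, ContDiffOn ℝ 2 u Ω ∧ ∀ x ∈ Ω, grad2 u x = V x := by
  have hVi : ∀ i, ContDiffOn ℝ 1 (fun y => V y i) Ω := fun i => contDiffOn_pi.1 hV i
  have hform : ContDiffOn ℝ 1 (form2 V) Ω := by
    unfold form2
    exact ((hVi 0).smul contDiffOn_const).add ((hVi 1).smul contDiffOn_const)
  have hVd : ∀ i, ∀ a ∈ Ω, DifferentiableAt ℝ (fun y => V y i) a := fun i a ha =>
    ((hVi i).differentiableOn (by norm_num)).differentiableAt (hΩ.mem_nhds ha)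
  have hfd : ∀ a ∈ Ω, ∀ x y, fderiv ℝ (form2 V) a x y
      = fderiv ℝ (fun y => V y 0) a x * y 0 + fderiv ℝ (fun y => V y 1) a x * y 1 := by
    intro a ha x y
    have h := ((hVd 0 a ha).hasFDerivAt.smul_const
        (ContinuousLinearMap.proj (R := ℝ) (φ := fun _ : Fin 2 => ℝ) 0)).add
      ((hVd 1 a ha).hasFDerivAt.smul_const
        (ContinuousLinearMap.proj (R := ℝ) (φ := fun _ : Fin 2 => ℝ) 1))
    have h' : fderiv ℝ (form2 V) a = _ := h.fderiv
    rw [h']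
    simp
  obtain ⟨u, hu⟩ := exists_prim_of_closed Ω hΩ hsc (form2 V)
    (hform.differentiableOn (by norm_num)) (by
      intro a ha x y
      rw [hfd a ha, hfd a ha]
      have hc := hcurl a ha
      unfold curl2 pd at hc
      have e : ∀ i v, fderiv ℝ (fun y => V y i) a v
          = v 0 * fderiv ℝ (fun y => V y i) a (Pi.single 0 1)
            + v 1 * fderiv ℝ (fun y => V y i) a (Pi.single 1 1) := by
        intro i v
        conv_lhs => rw [vec_decomp v]
        rw [map_add, map_smul, map_smul, smul_eq_mul, smul_eq_mul]
      rw [e 0 x, e 1 x, e 0 y, e 1 y]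
      linear_combination (x 0 * y 1 - x 1 * y 0) * hc)
  refine ⟨u, ?_, ?_⟩
  · rw [show (2 : WithTop ℕ∞) = 1 + 1 by norm_num, contDiffOn_succ_iff_fderiv_of_isOpen hΩ]
    refine ⟨fun x hx => (hu x hx).differentiableAt.differentiableWithinAt, by simp, ?_⟩
    exact hform.congr fun x hx => (hu x hx).fderiv
  · intro x hx
    ext i
    fin_cases i <;> simp [grad2, pd, (hu x hx).fderiv, form2_apply]

theorem curl_of_potential (Ω : Set (Fin 2 → ℝ)) (hΩ : IsOpen Ω)
    (V : (Fin 2 → ℝ) → (Fin 2 → ℝ)) (u : (Fin 2 → ℝ) → ℝ) (hu : ContDiffOn ℝ 2 u Ω)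
    (hg : ∀ x ∈ Ω, grad2 u x = V x) : ∀ x ∈ Ω, curl2 V x = 0 := by
  intro x hx
  have hat : ContDiffAt ℝ 2 u x := hu.contDiffAt (hΩ.mem_nhds hx)
  have hsym := hat.isSymmSndFDerivAt (by simp)
  have hdd : DifferentiableAt ℝ (fderiv ℝ u) x :=
    (hat.fderiv_right (m := 1) (by norm_num)).differentiableAt (by norm_num)
  have key : ∀ i j : Fin 2, pd j (fun y => V y i) x
      = fderiv ℝ (fderiv ℝ u) x (Pi.single j 1) (Pi.single i 1) := by
    intro i j
    have hev : (fun y => V y i) =ᶠ[nhds x] fun y => fderiv ℝ u y (Pi.single i 1) := by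
      filter_upwards [hΩ.mem_nhds hx] with y hy
      rw [← hg y hy]
      fin_cases i <;> simp [grad2, pd]
    unfold pd
    rw [hev.fderiv_eq, fderiv_clm_apply hdd (differentiableAt_const _)]
    simp
  unfold curl2
  rw [key, key, hsym.eq, sub_self]

theorem curl2_smul (c : ℝ) (Ω : Set (Fin 2 → ℝ)) (hΩ : IsOpen Ω)
    (S : (Fin 2 → ℝ) → (Fin 2 → ℝ)) (hS : ContDiffOn ℝ 1 S Ω) (x : Fin 2 → ℝ) (hx : x ∈ Ω) :
    curl2 (fun y => c • S y) x = c * curl2 S x := by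
  have hVd : ∀ i, DifferentiableAt ℝ (fun y => S y i) x := fun i =>
    ((contDiffOn_pi.1 hS i).differentiableOn (by norm_num)).differentiableAt (hΩ.mem_nhds hx)
  unfold curl2 pd
  simp only [Pi.smul_apply, smul_eq_mul]
  rw [fderiv_const_mul (hVd 0), fderiv_const_mul (hVd 1)]
  simp
  ring

/-- Theorem 8.1, analytic form. (i) A `C²` potential `u` with
`∇u = S/C` exists on the simply connected domain `Ω` iff `curl S = 0`; (ii) for any such
`u` the two-mirror construction sends `(x,0)` to the point above `x + Sx`. -/
theorem two_mirror_imaging (C : ℝ) (hC : C ≠ 0)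
    (Ω : Set (Fin 2 → ℝ)) (hΩ : IsOpen Ω) (hsc : SimplyConnectedSpace Ω)
    (S : (Fin 2 → ℝ) → (Fin 2 → ℝ)) (hS : ContDiffOn ℝ 1 S Ω) :
    ((∃ u : (Fin 2 → ℝ) → ℝ, ContDiffOn ℝ 2 u Ω ∧ ∀ x ∈ Ω, grad2 u x = C⁻¹ • S x) ↔
      ∀ x ∈ Ω, curl2 S x = 0) ∧
    ∀ u : (Fin 2 → ℝ) → ℝ, ContDiffOn ℝ 2 u Ω →
      (∀ x ∈ Ω, grad2 u x = C⁻¹ • S x) →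
      ∀ m1 : (Fin 2 → ℝ) → (Fin 3 → ℝ),
        (∀ x, m1 x = ![2 * grad2 u x 0 / (1 + norm2 (grad2 u x) ^ 2),
            2 * grad2 u x 1 / (1 + norm2 (grad2 u x) ^ 2),
            1 - 2 / (1 + norm2 (grad2 u x) ^ 2)]) →
        ∀ d : (Fin 2 → ℝ) → ℝ,
          (∀ x, d x = C / (1 - dot3 (m1 x) ![0, 0, 1])) →
          ∀ f : (Fin 2 → ℝ) → (Fin 3 → ℝ),
            (∀ x, f x = ![x 0, x 1, u x] + d x • m1 x) →
            ∀ x ∈ Ω, f x 0 = x 0 + S x 0 ∧ f x 1 = x 1 + S x 1 := by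
  refine ⟨⟨?_, ?_⟩, ?_⟩
  · rintro ⟨u, hu, hg⟩ x hx
    have h := curl_of_potential Ω hΩ (fun y => C⁻¹ • S y) u hu hg x hx
    rw [curl2_smul C⁻¹ Ω hΩ S hS x hx] at h
    exact (mul_eq_zero.1 h).resolve_left (inv_ne_zero hC)
  · intro h
    exact exists_potential Ω hΩ hsc (fun y => C⁻¹ • S y) (hS.const_smul C⁻¹)
      (fun x hx => by rw [curl2_smul C⁻¹ Ω hΩ S hS x hx, h x hx, mul_zero])
  · intro u _ hg m1 hm d hd f hf x hx
    have hp : (1 + norm2 (grad2 u x) ^ 2) ≠ 0 := by positivity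
    have hm2 : dot3 (m1 x) ![0, 0, 1] = 1 - 2 / (1 + norm2 (grad2 u x) ^ 2) := by
      rw [hm]; simp [dot3]
    have hd' : d x = C * (1 + norm2 (grad2 u x) ^ 2) / 2 := by
      rw [hd, hm2]; field_simp; ring
    have h0 : grad2 u x 0 = C⁻¹ * S x 0 := by rw [hg x hx]; simp
    have h1 : grad2 u x 1 = C⁻¹ * S x 1 := by rw [hg x hx]; simp
    have e0 : f x 0 = x 0 + d x * (2 * grad2 u x 0 / (1 + norm2 (grad2 u x) ^ 2)) := by
      rw [hf, hm]; simp
    have e1 : f x 1 = x 1 + d x * (2 * grad2 u x 1 / (1 + norm2 (grad2 u x) ^ 2)) := by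
      rw [hf, hm]; simp
    generalize norm2 (grad2 u x) = N at *
    constructor
    · rw [e0, hd', h0]; field_simp
    · rw [e1, hd', h1]; field_simp
end
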